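/- arXiv:1411.6852 — 2 statements merged into one kernel-verified Lean document; each statement's English description precedes it below -/
import Mathlib

section
/- Let G be a finite connected undirected graph with non-negative rational edge weights, let T_s be a shortest path tree of G rooted at s, and let t be a vertex of G. Then, for any edge (u,v) on the tree path from s to t in T_s, with v the endpoint closer to t, and for every vertex z in the subtree T_v of T_s rooted at v, the distance from z to t is unchanged by removing the edge (u,v): d_G(z,t) = d_{G−(u,v)}(z,t). -/
/-- A walk in a graph `E` from `s` to `t`, given as its list of vertices. -/
def IsWalk {V : Type} (E : V → V → Prop) (s t : V) (l : List V) : Prop :=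
  l ≠ [] ∧ l.head? = some s ∧ l.getLast? = some t ∧ l.Chain' E

/-- A simple path from `s` to `t` (no repeated vertices). -/
def IsPath {V : Type} (E : V → V → Prop) (s t : V) (l : List V) : Prop :=
  IsWalk E s t l ∧ l.Nodup

/-- The weight of a path: sum of the weights of its edges. -/
def pathWeight {V : Type} (w : V → V → ℚ) (l : List V) : ℚ :=
  ((l.zip l.tail).map fun p => w p.1 p.2).sum

/-- The distance from `u` to `v`: minimum weight of a path, `⊤` if there is none. -/
noncomputable def dist {V : Type} [Fintype V] [DecidableEq V]
    (E : V → V → Prop) (w : V → V → ℚ) (u v : V) : WithTop ℚ :=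
  (Finset.univ : Finset {l : List V // l.Nodup}).inf fun l =>
    haveI := Classical.propDecidable (IsPath E u v l.1)
    if IsPath E u v l.1 then (pathWeight w l.1 : WithTop ℚ) else ⊤

/-- `G - (u,v)`: delete the (undirected) edge `{u,v}`. -/
def delEdge {V : Type} (E : V → V → Prop) (u v : V) : V → V → Prop :=
  fun a b => E a b ∧ ¬((a = u ∧ b = v) ∨ (a = v ∧ b = u))

/-- The subtree `T_v` of the tree `ET` rooted at `s`: the set of vertices whose tree path
from `s` passes through `v`. -/
def Subtree {V : Type} (ET : V → V → Prop) (s v : V) : Set V :=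
  {x | ∀ l, IsPath ET s x l → v ∈ l}

/-!
Fix an edge `(u, v)` of the tree path to `t`. The shortest path from `s` to any `x ∈ T_v` runs
through `u` and `v` and then continues from `v` without returning to `u`, so `v` is at least as
close to `x` in `G - (u, v)` as `u` is in `G`. Apply this to `x = z` and `x = t`: whenever a path
from `z` to `t` crosses the edge, in either direction, the segment at `u` can be traded for a
segment at `v` that avoids the edge and is no heavier. Hence going from `z` to `v` to `t` inside
`G - (u, v)` costs no more than the given path.
-/

section Path

variable {V : Type} {E F : V → V → Prop} {a b s t x : V} {l l₁ l₂ : List V}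

theorem isWalk_iff :
    IsWalk E s t l ↔ l.head? = some s ∧ l.getLast? = some t ∧ l.IsChain E := by
  refine and_iff_right_of_imp fun h => ?_
  rintro rfl
  simp at h

theorem isWalk_singleton_iff : IsWalk E s t [a] ↔ a = s ∧ a = t := by
  simp [isWalk_iff]

theorem isWalk_cons_cons_iff :
    IsWalk E s t (a :: b :: l) ↔ a = s ∧ E a b ∧ IsWalk E b t (b :: l) := by
  simp only [isWalk_iff, List.isChain_cons_cons, List.head?_cons, List.getLast?_cons_cons,
    Option.some_inj, true_and]
  tauto

theorem IsWalk.isChain (h : IsWalk E s t l) : l.IsChain E :=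
  h.2.2.2

theorem IsWalk.rel_of_append_cons_cons (h : IsWalk E s t (l₁ ++ a :: b :: l₂)) : E a b :=
  (List.isChain_append_cons_cons.1 h.isChain).2.1

theorem IsWalk.of_append_left (h : IsWalk E s t (l₁ ++ x :: l₂)) : IsWalk E s x (l₁ ++ [x]) := by
  refine isWalk_iff.2 ⟨?_, by simp, (List.isChain_split.1 h.isChain).1⟩
  rw [← h.2.1]
  cases l₁ <;> rfl

theorem IsWalk.of_append_right (h : IsWalk E s t (l₁ ++ x :: l₂)) : IsWalk E x t (x :: l₂) := by
  refine isWalk_iff.2 ⟨rfl, ?_, (List.isChain_split.1 h.isChain).2⟩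
  rw [← h.2.2.1, List.getLast?_append_of_ne_nil _ (List.cons_ne_nil x l₂)]

theorem IsWalk.reverse [Std.Symm E] (h : IsWalk E s t l) : IsWalk E t s l.reverse := by
  refine isWalk_iff.2 ⟨by simpa using h.2.2.1, by simpa using h.2.1, ?_⟩
  exact List.isChain_reverse.2 (h.isChain.imp fun _ _ => symm_of E)

theorem IsPath.of_isChain (h : IsPath E s t l) (hF : l.IsChain F) : IsPath F s t l :=
  ⟨⟨h.1.1, h.1.2.1, h.1.2.2.1, hF⟩, h.2⟩

theorem IsPath.mono (hEF : ∀ a b, E a b → F a b) (h : IsPath E s t l) : IsPath F s t l :=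
  h.of_isChain (h.1.isChain.imp hEF)

theorem IsPath.of_append_left (h : IsPath E s t (l₁ ++ x :: l₂)) : IsPath E s x (l₁ ++ [x]) :=
  ⟨h.1.of_append_left, h.2.sublist (by simp)⟩

theorem IsPath.of_append_right (h : IsPath E s t (l₁ ++ x :: l₂)) : IsPath E x t (x :: l₂) :=
  ⟨h.1.of_append_right, h.2.of_append_right⟩

theorem IsPath.reverse [Std.Symm E] (h : IsPath E s t l) : IsPath E t s l.reverse :=
  ⟨h.1.reverse, List.nodup_reverse.2 h.2⟩

theorem IsPath.cons (hab : E a b) (h : IsPath E b t l) (ha : a ∉ l) : IsPath E a t (a :: l) := by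
  obtain ⟨hl, hnodup⟩ := h
  match l, hl with
  | c :: l, hl =>
    obtain rfl : c = b := by simpa using hl.2.1
    exact ⟨isWalk_cons_cons_iff.2 ⟨rfl, hab, hl⟩, List.nodup_cons.2 ⟨ha, hnodup⟩⟩

end Path

section PathWeight

variable {V : Type} {E : V → V → Prop} {w : V → V → ℚ}

theorem pathWeight_singleton (w : V → V → ℚ) (a : V) : pathWeight w [a] = 0 := by
  simp [pathWeight]

theorem pathWeight_cons_cons (w : V → V → ℚ) (a b : V) (l : List V) :
    pathWeight w (a :: b :: l) = w a b + pathWeight w (b :: l) := by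
  simp [pathWeight]

theorem pathWeight_cons_of_isWalk {b t : V} {l : List V} (h : IsWalk E b t l) (a : V) :
    pathWeight w (a :: l) = w a b + pathWeight w l := by
  match l, h with
  | c :: l, h =>
    obtain rfl : c = b := by simpa using h.2.1
    exact pathWeight_cons_cons w a c l

theorem pathWeight_append_cons (w : V → V → ℚ) (x : V) (l₁ l₂ : List V) :
    pathWeight w (l₁ ++ x :: l₂) = pathWeight w (l₁ ++ [x]) + pathWeight w (x :: l₂) := by
  induction l₁ using List.twoStepInduction with
  | nil => simp [pathWeight_singleton]
  | singleton a => simp [pathWeight_cons_cons, pathWeight_singleton]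
  | cons_cons a b l _ ih =>
    simp only [List.cons_append, pathWeight_cons_cons] at ih ⊢
    rw [ih, add_assoc]

theorem pathWeight_append_cons_cons (w : V → V → ℚ) (a b : V) (l₁ l₂ : List V) :
    pathWeight w (l₁ ++ a :: b :: l₂) =
      pathWeight w (l₁ ++ [a]) + w a b + pathWeight w (b :: l₂) := by
  rw [pathWeight_append_cons, pathWeight_cons_cons, add_assoc]

theorem pathWeight_reverse (hw : ∀ a b, w a b = w b a) (l : List V) :
    pathWeight w l.reverse = pathWeight w l := by
  induction l using List.twoStepInduction with
  | nil => rfl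
  | singleton a => rfl
  | cons_cons a b l _ ih =>
    calc pathWeight w (a :: b :: l).reverse
        = pathWeight w (l.reverse ++ b :: [a]) := by simp
      _ = pathWeight w (b :: l).reverse + w b a := by
        simp [pathWeight_append_cons_cons, pathWeight_singleton]
      _ = pathWeight w (a :: b :: l) := by rw [ih, hw b a, pathWeight_cons_cons, add_comm]

theorem pathWeight_nonneg (hw : ∀ a b, E a b → 0 ≤ w a b) {l : List V} (h : l.IsChain E) :
    0 ≤ pathWeight w l := by
  induction h with
  | nil => exact le_rfl
  | singleton a => exact (pathWeight_singleton w a).ge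
  | cons_cons hab _ ih =>
    rw [pathWeight_cons_cons]
    exact add_nonneg (hw _ _ hab) ih

end PathWeight

section Dist

variable {V : Type} [Fintype V] [DecidableEq V] {E F : V → V → Prop} {w : V → V → ℚ}
  {a b c s t : V} {l : List V}

theorem IsPath.dist_le (h : IsPath E s t l) : dist E w s t ≤ pathWeight w l :=
  (Finset.inf_le (Finset.mem_univ ⟨l, h.2⟩)).trans_eq (if_pos h)

theorem le_dist {d : WithTop ℚ} (h : ∀ l, IsPath E s t l → d ≤ pathWeight w l) :
    d ≤ dist E w s t := by
  refine Finset.le_inf fun l _ => ?_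
  split_ifs with hl
  · exact h l hl
  · exact le_top

theorem exists_isPath_pathWeight_eq_dist (h : dist E w s t ≠ ⊤) :
    ∃ l, IsPath E s t l ∧ dist E w s t = pathWeight w l := by
  classical
  obtain ⟨l, -, hl⟩ := Finset.exists_mem_eq_inf (Finset.univ : Finset {l : List V // l.Nodup})
    ⟨⟨[], List.nodup_nil⟩, Finset.mem_univ _⟩
    fun l => if IsPath E s t l.1 then (pathWeight w l.1 : WithTop ℚ) else ⊤
  have hdist : dist E w s t = if IsPath E s t l.1 then (pathWeight w l.1 : WithTop ℚ) else ⊤ := by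
    rw [← hl, _root_.dist]
  by_cases hpath : IsPath E s t l.1
  · exact ⟨l, hpath, hdist.trans (if_pos hpath)⟩
  · exact absurd (hdist.trans (if_neg hpath)) h

theorem dist_anti (hEF : ∀ a b, E a b → F a b) : dist F w s t ≤ dist E w s t :=
  le_dist fun _ hl => (hl.mono hEF).dist_le

theorem dist_symm [Std.Symm E] (hw : ∀ a b, w a b = w b a) (s t : V) :
    dist E w s t = dist E w t s := by
  have hle (s t : V) : dist E w s t ≤ dist E w t s :=
    le_dist fun l hl => pathWeight_reverse hw l ▸ hl.reverse.dist_le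
  exact (hle s t).antisymm (hle t s)

theorem dist_le_weight_add_dist (hw : ∀ a b, E a b → 0 ≤ w a b) (hab : E a b) :
    dist E w a c ≤ w a b + dist E w b c := by
  by_cases htop : dist E w b c = ⊤
  · simp [htop]
  obtain ⟨l, hl, hdist⟩ := exists_isPath_pathWeight_eq_dist htop
  rw [hdist]
  by_cases ha : a ∈ l
  · obtain ⟨l₁, l₂, rfl⟩ := List.append_of_mem ha
    refine hl.of_append_right.dist_le.trans ?_
    have hnonneg := pathWeight_nonneg hw hl.of_append_left.1.isChain
    have hweight := hw a b hab
    norm_cast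
    rw [pathWeight_append_cons]
    linarith
  · refine (hl.cons hab ha).dist_le.trans_eq ?_
    rw [pathWeight_cons_of_isWalk hl.1, WithTop.coe_add]

theorem IsWalk.dist_le_pathWeight_add_dist (hw : ∀ a b, E a b → 0 ≤ w a b) (h : IsWalk E a b l) :
    dist E w a c ≤ pathWeight w l + dist E w b c := by
  induction l using List.twoStepInduction generalizing a with
  | nil => exact absurd rfl h.1
  | singleton x =>
    obtain ⟨rfl, rfl⟩ := isWalk_singleton_iff.1 h
    simp [pathWeight_singleton]
  | cons_cons x y l _ ih =>
    obtain ⟨rfl, hxy, hl⟩ := isWalk_cons_cons_iff.1 h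
    calc dist E w x c ≤ w x y + dist E w y c := dist_le_weight_add_dist hw hxy
      _ ≤ w x y + (pathWeight w (y :: l) + dist E w b c) := by gcongr; exact ih y hl
      _ = pathWeight w (x :: y :: l) + dist E w b c := by
        rw [pathWeight_cons_cons, WithTop.coe_add, add_assoc]

theorem dist_le_dist_add_dist (hw : ∀ a b, E a b → 0 ≤ w a b) (a b c : V) :
    dist E w a c ≤ dist E w a b + dist E w b c := by
  by_cases htop : dist E w a b = ⊤
  · simp [htop]
  obtain ⟨l, hl, hdist⟩ := exists_isPath_pathWeight_eq_dist htop
  rw [hdist]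
  exact hl.1.dist_le_pathWeight_add_dist hw

end Dist

section DelEdge

variable {V : Type} {E : V → V → Prop} {u v s t : V} {l l₁ l₂ : List V}

instance [Std.Symm E] : Std.Symm (delEdge E u v) :=
  ⟨fun _ _ h => ⟨symm_of E h.1, fun hedge => h.2 (by tauto)⟩⟩

theorem IsPath.delEdge_of_notMem (h : IsPath E s t l) (hu : u ∉ l) :
    IsPath (delEdge E u v) s t l := by
  refine h.of_isChain (h.1.isChain.imp_of_mem_imp fun a b ha hb hab => ⟨hab, ?_⟩)
  rintro (⟨rfl, -⟩ | ⟨-, rfl⟩)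
  exacts [hu ha, hu hb]

theorem IsPath.delEdge_or_exists_append (h : IsPath E s t l) (u v : V) :
    IsPath (delEdge E u v) s t l ∨
      (∃ l₁ l₂, l = l₁ ++ u :: v :: l₂) ∨ ∃ l₁ l₂, l = l₁ ++ v :: u :: l₂ := by
  refine or_iff_not_imp_right.2 fun hl => h.of_isChain ?_
  refine List.isChain_iff_forall_rel_of_append_cons_cons.2 fun a b l₁ l₂ hab =>
    ⟨(hab ▸ h.1).rel_of_append_cons_cons, ?_⟩
  rintro (⟨rfl, rfl⟩ | ⟨rfl, rfl⟩)
  exacts [hl (.inl ⟨l₁, l₂, hab⟩), hl (.inr ⟨l₁, l₂, hab⟩)]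

theorem IsPath.delEdge_of_append_cons_cons_left (h : IsPath E s t (l₁ ++ v :: u :: l₂)) :
    IsPath (delEdge E u v) s v (l₁ ++ [v]) :=
  h.of_append_left.delEdge_of_notMem fun hu =>
    List.disjoint_of_nodup_append (l₂ := u :: l₂) (by simpa using h.2) hu List.mem_cons_self

theorem IsPath.delEdge_of_append_cons_cons_right (h : IsPath E s t (l₁ ++ u :: v :: l₂)) :
    IsPath (delEdge E u v) v t (v :: l₂) :=
  (h.of_append_right.of_append_right (l₁ := [u])).delEdge_of_notMem
    (List.nodup_cons.1 h.of_append_right.2).1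

variable [Fintype V] [DecidableEq V] {w : V → V → ℚ}

theorem dist_delEdge_le_of_isPath (hw : ∀ a b, E a b → 0 ≤ w a b)
    (hpath : IsPath E s t (l₁ ++ u :: v :: l₂))
    (hshort : (pathWeight w (l₁ ++ u :: v :: l₂) : WithTop ℚ) = dist E w s t) :
    dist (delEdge E u v) w v t ≤ dist E w u t := by
  refine hpath.delEdge_of_append_cons_cons_right.dist_le.trans ?_
  have hdetour : (pathWeight w (l₁ ++ u :: v :: l₂) : WithTop ℚ) ≤
      pathWeight w (l₁ ++ [u]) + dist E w u t :=
    hshort.trans_le (hpath.of_append_left.1.dist_le_pathWeight_add_dist hw)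
  have hweight : 0 ≤ w u v := hw u v hpath.1.rel_of_append_cons_cons
  rw [pathWeight_append_cons_cons] at hdetour
  cases hd : dist E w u t with
  | top => exact le_top
  | coe d =>
    rw [hd] at hdetour
    norm_cast at hdetour ⊢
    linarith

theorem dist_delEdge_eq_of_le (hw : ∀ a b, E a b → 0 ≤ w a b)
    (hs : dist (delEdge E u v) w s v ≤ dist E w s u)
    (ht : dist (delEdge E u v) w v t ≤ dist E w u t) :
    dist (delEdge E u v) w s t = dist E w s t := by
  refine le_antisymm (le_dist fun l hl => ?_) (dist_anti fun _ _ h => h.1)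
  rcases hl.delEdge_or_exists_append u v with hdel | ⟨l₁, l₂, rfl⟩ | ⟨l₁, l₂, rfl⟩
  · exact hdel.dist_le
  all_goals
    refine (dist_le_dist_add_dist (fun a b h => hw a b h.1) s v t).trans ?_
    have hweight := hw _ _ hl.1.rel_of_append_cons_cons
  · calc dist (delEdge E u v) w s v + dist (delEdge E u v) w v t
        ≤ pathWeight w (l₁ ++ [u]) + pathWeight w (v :: l₂) :=
          add_le_add (hs.trans hl.of_append_left.dist_le)
            hl.delEdge_of_append_cons_cons_right.dist_le
      _ ≤ pathWeight w (l₁ ++ u :: v :: l₂) := by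
        rw [pathWeight_append_cons_cons]
        norm_cast
        linarith
  · calc dist (delEdge E u v) w s v + dist (delEdge E u v) w v t
        ≤ pathWeight w (l₁ ++ [v]) + pathWeight w (u :: l₂) :=
          add_le_add hl.delEdge_of_append_cons_cons_left.dist_le
            (ht.trans (hl.of_append_right.of_append_right (l₁ := [v])).dist_le)
      _ ≤ pathWeight w (l₁ ++ v :: u :: l₂) := by
        rw [pathWeight_append_cons_cons]
        norm_cast
        linarith

end DelEdge

theorem exists_isPath_append_of_mem_subtree {V : Type} {ET : V → V → Prop} {s v x : V} {l : List V}
    (hT : ∀ x, ∃! l, IsPath ET s x l) (hv : IsPath ET s v (l ++ [v])) (hx : x ∈ Subtree ET s v) :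
    ∃ l', IsPath ET s x (l ++ v :: l') := by
  obtain ⟨p, hp, -⟩ := hT x
  obtain ⟨l₁, l₂, rfl⟩ := List.append_of_mem (hx p hp)
  obtain rfl : l₁ = l := List.append_cancel_right ((hT v).unique hp.of_append_left hv)
  exact ⟨l₂, hp⟩

/-- If `T_s` (given by the symmetric edge relation `ET`) is a shortest path tree of the finite
connected undirected graph `G = (E, w)` rooted at `s`, and `(u,v)` is an edge of the tree path
from `s` to `t` with `v` the endpoint closer to `t`, then for every vertex `z` of the subtree
`T_v`, the distance from `z` to `t` is unchanged by removing `(u,v)`: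
`d_G(z,t) = d_{G-(u,v)}(z,t)`. -/
theorem dist_toward_t_eq_of_delEdge {V : Type} [Fintype V] [DecidableEq V]
    (E : V → V → Prop) (w : V → V → ℚ)
    (hsymm : Symmetric E) (hwsymm : ∀ a b : V, w a b = w b a)
    (hw : ∀ a b, E a b → 0 ≤ w a b)
    (hconn : ∀ a b : V, ∃ l, IsPath E a b l)
    (s t : V) (ET : V → V → Prop)
    (hTsub : ∀ a b, ET a b → E a b) (hTsymm : Symmetric ET)
    (hTtree : ∀ x : V, ∃! l, IsPath ET s x l)
    (hTshort : ∀ (x : V) (l : List V), IsPath ET s x l →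
      (pathWeight w l : WithTop ℚ) = dist E w s x)
    (u v : V) (ptree l₁ l₂ : List V)
    (hptree : IsPath ET s t ptree) (hsplit : ptree = l₁ ++ u :: v :: l₂) :
    ∀ z ∈ Subtree ET s v, dist E w z t = dist (delEdge E u v) w z t := by
  subst hsplit
  have : Std.Symm E := ⟨fun _ _ h => hsymm h⟩
  have hv : IsPath ET s v ((l₁ ++ [u]) ++ [v]) :=
    IsPath.of_append_left (l₂ := l₂) (by simpa using hptree)
  have hcloser : ∀ x ∈ Subtree ET s v, dist (delEdge E u v) w v x ≤ dist E w u x := by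
    intro x hx
    obtain ⟨l, hl⟩ := exists_isPath_append_of_mem_subtree hTtree hv hx
    rw [List.append_assoc, List.singleton_append] at hl
    exact dist_delEdge_le_of_isPath hw (hl.mono hTsub) (hTshort x _ hl)
  have ht : t ∈ Subtree ET s v := by
    intro l hl
    rw [(hTtree t).unique hl hptree]
    simp
  intro z hz
  refine (dist_delEdge_eq_of_le hw ?_ (hcloser t ht)).symm
  rw [dist_symm hwsymm z v, dist_symm hwsymm z u]
  exact hcloser z hz
end

section
/- Let G be a finite connected undirected graph with non-negative rational edge weights, let s, t, α be such that P_α(s,t,G) ≠ ∅, let π_{su} be a common prefix of P_α(s,t,G) ending at a vertex u ≠ t, and let e = {u,v} be an edge of G incident to u. Then the extended path π_{su}·(u,v) is a common prefix of P_α(s,t,G) if and only if the shortest st-path in G − e has weight greater than α, i.e., d_{G−e}(s,t) > α. -/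
/-- `Pset E w α s t` is the set `P_α(s,t,G)` of `α`-bounded simple `st`-paths. -/
def Pset {V : Type} (E : V → V → Prop) (w : V → V → ℚ) (α : ℚ) (s t : V) : Set (List V) :=
  {l | IsPath E s t l ∧ pathWeight w l ≤ α}

/-!
An `α`-bounded path of `G - e` is the same thing as an `α`-bounded path of `G` that traverses `e`
in neither direction.  A simple path that starts with `π_su` visits `u` only at the end of `π_su`,
so it cannot traverse `e` from `v` to `u`, as `v` is not on `π_su`, and it traverses `e` from `u`
to `v` exactly when `v` comes right after `π_su`.  Hence `π_su·(u,v)` is a common prefix if and only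
if `G - e` has no `α`-bounded path.
-/

section ListPrefix

variable {ι : Type*} {a b : ι} {l p : List ι}

theorem append_cons_inj_of_nodup {x₁ x₂ z₁ z₂ : List ι} (h : (x₁ ++ a :: z₁).Nodup) :
    x₁ ++ a :: z₁ = x₂ ++ a :: z₂ ↔ x₁ = x₂ ∧ z₁ = z₂ := by
  obtain ⟨hx, hz⟩ : a ∉ x₁ ∧ a ∉ z₁ := by
    simpa only [List.mem_append, not_or] using (List.nodup_cons.1 (List.nodup_middle.1 h)).1
  simp only [List.append_cons_inj_of_notMem hx hz, true_and]

theorem pair_infix_iff_append_singleton_prefix (hl : l.Nodup) (hp : p <+: l)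
    (ha : p.getLast? = some a) : [a, b] <:+: l ↔ p ++ [b] <+: l := by
  obtain ⟨q, rfl⟩ := List.getLast?_eq_some_iff.1 ha
  constructor
  · obtain ⟨r, rfl⟩ := hp
    rintro ⟨x, y, hxy⟩
    simp only [List.append_assoc, List.cons_append, List.nil_append] at hl hxy
    obtain ⟨-, rfl⟩ := (append_cons_inj_of_nodup hl).1 hxy.symm
    exact ⟨y, by simp⟩
  · rintro ⟨r, rfl⟩
    exact ⟨q, r, by simp⟩

theorem mem_prefix_of_pair_infix (hl : l.Nodup) (hp : p <+: l) (hb : b ∈ p)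
    (hab : [a, b] <:+: l) : a ∈ p := by
  obtain ⟨q, r, rfl⟩ := List.mem_iff_append.1 hb
  obtain ⟨z, rfl⟩ := hp
  obtain ⟨x, y, hxy⟩ := hab
  rw [List.append_assoc, List.cons_append] at hl
  have hsplit : q ++ b :: (r ++ z) = (x ++ [a]) ++ b :: y := by simpa using hxy.symm
  obtain ⟨rfl, -⟩ := (append_cons_inj_of_nodup hl).1 hsplit
  simp

end ListPrefix

section Graph

variable {V : Type} {E : V → V → Prop} {w : V → V → ℚ} {α : ℚ} {s t u v : V} {l p : List V}

theorem isChain_delEdge_iff :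
    l.IsChain (delEdge E u v) ↔ l.IsChain E ∧ ¬[u, v] <:+: l ∧ ¬[v, u] <:+: l := by
  constructor
  · intro h
    refine ⟨h.imp fun _ _ hab => hab.1, fun huv => ?_, fun hvu => ?_⟩
    · exact (List.isChain_pair.1 (h.infix huv)).2 (.inl ⟨rfl, rfl⟩)
    · exact (List.isChain_pair.1 (h.infix hvu)).2 (.inr ⟨rfl, rfl⟩)
  · rintro ⟨h, huv, hvu⟩
    refine List.isChain_iff_forall_rel_of_append_cons_cons.2 fun a b x y hl => ?_
    have hab : [a, b] <:+: l := ⟨x, y, by simp [hl]⟩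
    refine ⟨List.isChain_pair.1 (h.infix hab), ?_⟩
    rintro (⟨rfl, rfl⟩ | ⟨rfl, rfl⟩)
    exacts [huv hab, hvu hab]

theorem mem_Pset_delEdge_iff :
    l ∈ Pset (delEdge E u v) w α s t ↔
      l ∈ Pset E w α s t ∧ ¬[u, v] <:+: l ∧ ¬[v, u] <:+: l := by
  constructor
  · rintro ⟨⟨⟨hne, hs, ht, hchain⟩, hnodup⟩, hα⟩
    obtain ⟨hchain, havoid⟩ := isChain_delEdge_iff.1 hchain
    exact ⟨⟨⟨⟨hne, hs, ht, hchain⟩, hnodup⟩, hα⟩, havoid⟩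
  · rintro ⟨⟨⟨⟨hne, hs, ht, hchain⟩, hnodup⟩, hα⟩, havoid⟩
    exact ⟨⟨⟨hne, hs, ht, isChain_delEdge_iff.2 ⟨hchain, havoid⟩⟩, hnodup⟩, hα⟩

theorem mem_Pset_delEdge_iff_not_prefix (hp : p <+: l) (hu : p.getLast? = some u) (hv : v ∉ p) :
    l ∈ Pset (delEdge E u v) w α s t ↔ l ∈ Pset E w α s t ∧ ¬p ++ [v] <+: l := by
  rw [mem_Pset_delEdge_iff]
  refine and_congr_right fun hl => ?_
  have hnodup : l.Nodup := hl.1.2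
  have hvu : ¬[v, u] <:+: l := fun h =>
    hv (mem_prefix_of_pair_infix hnodup hp (List.mem_of_getLast? hu) h)
  rw [pair_infix_iff_append_singleton_prefix hnodup hp hu, and_iff_left hvu]

theorem forall_append_singleton_prefix_iff (hp : ∀ σ ∈ Pset E w α s t, p <+: σ)
    (hu : p.getLast? = some u) (hv : v ∉ p) :
    (∀ σ ∈ Pset E w α s t, p ++ [v] <+: σ) ↔ Pset (delEdge E u v) w α s t = ∅ := by
  rw [Set.eq_empty_iff_forall_notMem]
  refine forall_congr' fun σ => ?_
  by_cases hσ : σ ∈ Pset E w α s t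
  · simp only [mem_Pset_delEdge_iff_not_prefix (hp σ hσ) hu hv, hσ, true_and, not_not,
      forall_const]
  · simp only [mem_Pset_delEdge_iff, hσ, false_and, not_false_eq_true, false_imp_iff]

theorem coe_lt_dist_iff [Fintype V] [DecidableEq V] :
    (α : WithTop ℚ) < dist E w s t ↔ Pset E w α s t = ∅ := by
  have hdist : (α : WithTop ℚ) < dist E w s t ↔ ∀ l, IsPath E s t l → α < pathWeight w l := by
    simp only [_root_.dist, Finset.lt_inf_iff (WithTop.coe_lt_top α), Finset.mem_univ,
      forall_const, Subtype.forall]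
    refine forall_congr' fun l => ?_
    by_cases hl : IsPath E s t l
    · simp [hl, hl.2]
    · simp [hl]
  simp only [hdist, Set.eq_empty_iff_forall_notMem, Pset, Set.mem_ofPred_eq, not_and, not_le]

theorem extend_prefix_iff_dist_gt_general [Fintype V] [DecidableEq V]
    (hp : ∀ σ ∈ Pset E w α s t, p <+: σ) (hu : p.getLast? = some u) (hv : v ∉ p) :
    (∀ σ ∈ Pset E w α s t, p ++ [v] <+: σ) ↔
      (α : WithTop ℚ) < dist (delEdge E u v) w s t :=
  (forall_append_singleton_prefix_iff hp hu hv).trans coe_lt_dist_iff.symm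

end Graph

/-- Let `G = (E,w)` be a finite connected undirected graph with non-negative weights, with
`P_α(s,t,G) ≠ ∅`, let `π_su` be a common prefix of `P_α(s,t,G)` ending at `u ≠ t`, and let
`e = {u,v}` be an edge of `G` incident to `u` (with `v` not on `π_su`, so that the extension is
a path).  Then the extended path `π_su·(u,v)` is a common prefix of `P_α(s,t,G)` if and only if
`d_{G-e}(s,t) > α`. -/
theorem extend_prefix_iff_dist_gt {V : Type} [Fintype V] [DecidableEq V]
    (E : V → V → Prop) (w : V → V → ℚ)
    (hsymm : Symmetric E) (hwsymm : ∀ a b : V, w a b = w b a)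
    (hw : ∀ a b, E a b → 0 ≤ w a b)
    (hconn : ∀ a b : V, ∃ l, IsPath E a b l)
    (s t : V) (α : ℚ)
    (hne : (Pset E w α s t).Nonempty)
    (πsu : List V) (u v : V)
    (hcp : ∀ σ ∈ Pset E w α s t, πsu <+: σ)
    (hu : πsu.getLast? = some u) (hut : u ≠ t)
    (he : E u v) (hvnot : v ∉ πsu) :
    (∀ σ ∈ Pset E w α s t, (πsu ++ [v]) <+: σ) ↔ (α : WithTop ℚ) < dist (delEdge E u v) w s t :=
  extend_prefix_iff_dist_gt_general hcp hu hvnot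
end
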